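/- (Occupation-difference asymptotics for the RWI.) Suppose p < 1. Then, with ε_n = 1_{S_n∈V_0} − 1_{S_n∈V_1} and I_n = Σ_{k=0}^n ε_k and N_n = Σ_{k=1}^n (ε_k − E[ε_k | F_{k−1}]), one has the almost sure identity 2(1−p)·I_n = 1 + N_n − (2p−1)·ε_n for all n ≥ 1; moreover I_n/n → 0 almost surely, and almost surely I_n² = O(n log n). -/

import Mathlib

open MeasureTheory ProbabilityTheory Real Filter Set
open scoped BigOperators NNReal

noncomputable section

namespace RWI

abbrev E : Type := EuclideanSpace ℝ (Fin 3)

def vec (x y z : ℝ) : E := (EuclideanSpace.equiv (Fin 3) ℝ).symm ![x, y, z]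

/-- The two families of vertices of the `1h` ice lattice. -/
def V (a h : ℝ) (i : Fin 2) : Set E :=
  {v | ∃ k l n : ℤ, v = vec (a * ((i : ℕ) + (3 / 2) * k))
      (a * ((Real.sqrt 3 / 2) * k + Real.sqrt 3 * l)) (h * n)}

/-- Horizontal jump from a vertex of type `i` in direction `j`. -/
def w (a : ℝ) (i : Fin 2) (j : Fin 3) : E :=
  vec (a * Real.cos (2 * (j : ℕ) * π / 3 + (i : ℕ) * π))
      (a * Real.sin (2 * (j : ℕ) * π / 3 + (i : ℕ) * π)) 0

/-- `S` is a random walk on ice with parameters `a, h, p, α, q` and natural filtration `F`. -/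
structure IsRWI {Ω : Type} [MeasurableSpace Ω] (P : Measure Ω)
    (a h p α : ℝ) (q : Fin 2 → Fin 3 → ℝ)
    (S : ℕ → Ω → E) (F : ℕ → MeasurableSpace Ω) : Prop where
  prob : IsProbabilityMeasure P
  ha : 0 < a
  hh : 0 < h
  hp0 : 0 ≤ p
  hp1 : p ≤ 1
  hα0 : 0 < α
  hα1 : α < 1
  hq : ∀ i j, 0 ≤ q i j
  hqsum : ∀ i, q i 0 + q i 1 + q i 2 = 1 - p
  hS0 : ∀ ω, S 0 ω = 0
  hSmeas : ∀ n, Measurable (S n)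
  hF : ∀ n, F n =
    MeasurableSpace.comap (fun ω (k : Fin n) => S ((k : ℕ) + 1) ω - S (k : ℕ) ω)
      MeasurableSpace.pi
  hTrans : ∀ (n : ℕ) (f : E → ℝ), Measurable f → (∃ C, ∀ x, |f x| ≤ C) →
    P[fun ω => f (S (n + 1) ω)|F n] =ᵐ[P]
      fun ω => ∑ i : Fin 2, (V a h i).indicator (fun _ => (1 : ℝ)) (S n ω) *
        (α * p * f (S n ω + vec 0 0 h) + (1 - α) * p * f (S n ω + vec 0 0 (-h)) +
          ∑ j : Fin 3, q i j * f (S n ω + w a i j))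

def uu (q : Fin 2 → Fin 3 → ℝ) (i : Fin 2) : ℝ := q i 1 + q i 2

def vv (q : Fin 2 → Fin 3 → ℝ) (i : Fin 2) : ℝ := q i 1 - q i 2

/-- The drift vector `μ` of the RWI. -/
def muI (a h p α : ℝ) (q : Fin 2 → Fin 3 → ℝ) : E :=
  vec (3 * a / 4 * (-(uu q 0) + uu q 1)) (a * Real.sqrt 3 / 4 * (vv q 0 - vv q 1))
    (h * p * (2 * α - 1))

/-- The vector `θ` of the RWI. -/
def thetaI (a p : ℝ) (q : Fin 2 → Fin 3 → ℝ) : E :=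
  vec (a * ((1 - p) - 3 / 4 * (uu q 0 + uu q 1))) (a * Real.sqrt 3 / 4 * (vv q 0 + vv q 1)) 0

/-- The sign process `ε_n = 1_{S_n ∈ V_0} - 1_{S_n ∈ V_1}`. -/
def epsI {Ω : Type} (a h : ℝ) (S : ℕ → Ω → E) (n : ℕ) (ω : Ω) : ℝ :=
  (V a h 0).indicator (fun _ => (1 : ℝ)) (S n ω) - (V a h 1).indicator (fun _ => (1 : ℝ)) (S n ω)

end RWI

namespace RWI

/-- `I_n = ∑_{k=0}^n ε_k`. -/
def II {Ω : Type} (a h : ℝ) (S : ℕ → Ω → E) (n : ℕ) (ω : Ω) : ℝ :=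
  ∑ k ∈ Finset.range (n + 1), epsI a h S k ω

/-- The sign martingale `N_n = ∑_{k=1}^n (ε_k - E[ε_k | F_{k-1}])`. -/
def NN {Ω : Type} [MeasurableSpace Ω] (P : Measure Ω) (a h : ℝ) (S : ℕ → Ω → E)
    (F : ℕ → MeasurableSpace Ω) (n : ℕ) (ω : Ω) : ℝ :=
  ∑ k ∈ Finset.Icc 1 n, (epsI a h S k ω - (P[fun ω' => epsI a h S k ω'|F (k - 1)]) ω)

end RWI

namespace RWI

section BoundedIncrements

lemma exp_mul_le_cosh_add_sinh {c d : ℝ} (hc : 0 < c) (hd : |d| ≤ c) (t : ℝ) :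
    exp (t * d) ≤ cosh (t * c) + sinh (t * c) / c * d := by
  obtain ⟨h1, h2⟩ := abs_le.mp hd
  have hconv := convexOn_exp.2 (mem_univ (t * c)) (mem_univ (-(t * c)))
    (show 0 ≤ (c + d) / (2 * c) from div_nonneg (by linarith) (by linarith))
    (show 0 ≤ (c - d) / (2 * c) from div_nonneg (by linarith) (by linarith))
    (by field_simp; ring)
  simp only [smul_eq_mul] at hconv
  have harg : (c + d) / (2 * c) * (t * c) + (c - d) / (2 * c) * (-(t * c)) = t * d := by
    field_simp
    ring
  rw [harg] at hconv
  refine hconv.trans (le_of_eq ?_)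
  rw [cosh_eq, sinh_eq]
  field_simp
  ring

variable {Ω : Type*} {m : MeasurableSpace Ω} {P : Measure Ω} [IsProbabilityMeasure P]
  {F : Filtration ℕ m} {D : ℕ → Ω → ℝ} {c : ℝ}

lemma stronglyMeasurable_sum_range (hD : ∀ k, StronglyMeasurable[F (k + 1)] (D k)) (n : ℕ) :
    StronglyMeasurable[F n] (fun ω => ∑ k ∈ Finset.range n, D k ω) :=
  Finset.stronglyMeasurable_fun_sum _ fun k hk =>
    (hD k).mono (F.mono (Finset.mem_range.mp hk))

lemma abs_sum_range_le (hbound : ∀ k ω, |D k ω| ≤ c) (n : ℕ) (ω : Ω) :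
    |∑ k ∈ Finset.range n, D k ω| ≤ n * c :=
  (Finset.abs_sum_le_sum_abs _ _).trans <|
    (Finset.sum_le_sum fun k _ => hbound k ω).trans (by simp)

lemma exp_mul_sum_range_le (hbound : ∀ k ω, |D k ω| ≤ c) (n : ℕ) (t : ℝ) (ω : Ω) :
    exp (t * ∑ k ∈ Finset.range n, D k ω) ≤ exp (|t| * (n * c)) := by
  refine exp_le_exp.mpr ((le_abs_self _).trans ?_)
  rw [abs_mul]
  exact mul_le_mul_of_nonneg_left (abs_sum_range_le hbound n ω) (abs_nonneg t)

lemma stronglyMeasurable_exp_mul_sum_range (hD : ∀ k, StronglyMeasurable[F (k + 1)] (D k))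
    (n : ℕ) (t : ℝ) :
    StronglyMeasurable[F n] (fun ω => exp (t * ∑ k ∈ Finset.range n, D k ω)) :=
  continuous_exp.comp_stronglyMeasurable
    ((stronglyMeasurable_sum_range hD n).const_mul t)

lemma integrable_exp_mul_sum_range (hD : ∀ k, StronglyMeasurable[F (k + 1)] (D k))
    (hbound : ∀ k ω, |D k ω| ≤ c) (n : ℕ) (t : ℝ) :
    Integrable (fun ω => exp (t * ∑ k ∈ Finset.range n, D k ω)) P := by
  refine Integrable.of_bound
    ((stronglyMeasurable_exp_mul_sum_range hD n t).mono (F.le n)).aestronglyMeasurable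
    (exp (|t| * (n * c))) (ae_of_all _ fun ω => ?_)
  rw [norm_of_nonneg (exp_pos _).le]
  exact exp_mul_sum_range_le hbound n t ω

/-- Exponential moment bound for martingales with bounded increments. -/
lemma mgf_sum_range_le (hc : 0 < c) (hD : ∀ k, StronglyMeasurable[F (k + 1)] (D k))
    (hbound : ∀ k ω, |D k ω| ≤ c) (hmart : ∀ k, P[D k|F k] =ᵐ[P] 0) (t : ℝ) (n : ℕ) :
    mgf (fun ω => ∑ k ∈ Finset.range n, D k ω) P t ≤ exp (n * (t * c) ^ 2 / 2) := by
  induction n with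
  | zero => simp [mgf]
  | succ n ih =>
    set Z : Ω → ℝ := fun ω => exp (t * ∑ k ∈ Finset.range n, D k ω) with hZ
    have hZint : Integrable Z P := integrable_exp_mul_sum_range hD hbound n t
    have hDint : Integrable (D n) P :=
      Integrable.of_bound ((hD n).mono (F.le _)).aestronglyMeasurable c
        (ae_of_all _ fun ω => hbound n ω)
    have hpull : P[Z * D n|F n] =ᵐ[P] Z * P[D n|F n] :=
      condExp_stronglyMeasurable_mul_of_bound (F.le n)
        (stronglyMeasurable_exp_mul_sum_range hD n t) hDint (exp (|t| * (n * c)))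
        (ae_of_all _ fun ω => by
          rw [norm_of_nonneg (exp_pos _).le]
          exact exp_mul_sum_range_le hbound n t ω)
    have hZDint : Integrable (fun ω => Z ω * D n ω) P :=
      hZint.mul_bdd ((hD n).mono (F.le _)).aestronglyMeasurable
        (c := c) (ae_of_all _ fun ω => hbound n ω)
    have hzero : ∫ ω, Z ω * D n ω ∂P = 0 := by
      have h1 : ∫ ω, (P[Z * D n|F n]) ω ∂P = ∫ ω, (Z * D n) ω ∂P := integral_condExp (F.le n)
      have h2 : P[Z * D n|F n] =ᵐ[P] 0 := by
        filter_upwards [hpull, hmart n] with ω h3 h4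
        simp [h3, h4]
      rw [integral_congr_ae h2] at h1
      simpa using h1.symm
    calc mgf (fun ω => ∑ k ∈ Finset.range (n + 1), D k ω) P t
        ≤ ∫ ω, (cosh (t * c) * Z ω + sinh (t * c) / c * (Z ω * D n ω)) ∂P := by
          refine integral_mono (integrable_exp_mul_sum_range hD hbound (n + 1) t)
            ((hZint.const_mul _).add (hZDint.const_mul _)) fun ω => ?_
          have h1 := exp_mul_le_cosh_add_sinh hc (hbound n ω) t
          have h2 := mul_le_mul_of_nonneg_left h1 (exp_pos (t * ∑ k ∈ Finset.range n, D k ω)).le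
          simp only [Finset.sum_range_succ, mul_add, exp_add, hZ] at h2 ⊢
          linarith
      _ = cosh (t * c) * mgf (fun ω => ∑ k ∈ Finset.range n, D k ω) P t := by
          rw [integral_add (hZint.const_mul _) (hZDint.const_mul _), integral_const_mul,
            integral_const_mul, hzero]
          simp [mgf, hZ]
      _ ≤ exp ((t * c) ^ 2 / 2) * exp (n * (t * c) ^ 2 / 2) :=
          mul_le_mul (cosh_le_exp_half_sq _) ih mgf_nonneg (exp_pos _).le
      _ = exp ((n + 1 : ℕ) * (t * c) ^ 2 / 2) := by
          rw [← exp_add]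
          congr 1
          push_cast
          ring

lemma measureReal_sum_range_ge_le (hc : 0 < c)
    (hD : ∀ k, StronglyMeasurable[F (k + 1)] (D k))
    (hbound : ∀ k ω, |D k ω| ≤ c) (hmart : ∀ k, P[D k|F k] =ᵐ[P] 0) {n : ℕ} (hn : 1 ≤ n) :
    P.real {ω | 2 * c * √(n * log n) ≤ ∑ k ∈ Finset.range n, D k ω} ≤ 1 / (n : ℝ) ^ 2 := by
  have hn' : (0 : ℝ) < n := by exact_mod_cast hn
  have hlog : 0 ≤ log n := log_nonneg (by exact_mod_cast hn)
  set s := √(n * log n)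
  have hs : s ^ 2 = n * log n := sq_sqrt (mul_nonneg hn'.le hlog)
  set t := 2 * s / (c * n)
  have ht : 0 ≤ t := by positivity
  refine (measure_ge_le_exp_mul_mgf (2 * c * s) ht
    (integrable_exp_mul_sum_range hD hbound n t)).trans ?_
  refine (mul_le_mul_of_nonneg_left (mgf_sum_range_le hc hD hbound hmart t n)
    (exp_pos _).le).trans (le_of_eq ?_)
  have harg : -t * (2 * c * s) + n * (t * c) ^ 2 / 2 = -(2 * log n) := by
    have h1 : -t * (2 * c * s) + n * (t * c) ^ 2 / 2 = -(2 * s ^ 2 / n) := by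
      simp only [t]
      field_simp
      ring
    rw [h1, hs]
    field_simp
  rw [← exp_add, harg, exp_neg, show 2 * log (n : ℝ) = log ((n : ℝ) ^ 2) by simp,
    exp_log (by positivity), one_div]

lemma ae_eventually_sum_range_lt (hc : 0 < c)
    (hD : ∀ k, StronglyMeasurable[F (k + 1)] (D k))
    (hbound : ∀ k ω, |D k ω| ≤ c) (hmart : ∀ k, P[D k|F k] =ᵐ[P] 0) :
    ∀ᵐ ω ∂P, ∀ᶠ n : ℕ in atTop,
      ∑ k ∈ Finset.range n, D k ω < 2 * c * √(n * log n) := by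
  have hsum : ∑' n : ℕ,
      P {ω | 2 * c * √((n + 1 : ℕ) * log (n + 1 : ℕ)) ≤
        ∑ k ∈ Finset.range (n + 1), D k ω} ≠ ⊤ := by
    have hs : Summable (fun n : ℕ => 1 / ((n + 1 : ℕ) : ℝ) ^ 2) :=
      (summable_nat_add_iff 1).mpr (summable_one_div_nat_pow.mpr one_lt_two)
    refine ne_top_of_le_ne_top hs.tsum_ofReal_ne_top (ENNReal.tsum_le_tsum fun n => ?_)
    rw [← ofReal_measureReal]
    exact ENNReal.ofReal_le_ofReal
      (measureReal_sum_range_ge_le hc hD hbound hmart (Nat.le_add_left 1 n))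
  filter_upwards [ae_eventually_notMem hsum] with ω hω
  rw [← map_add_atTop_eq_nat 1, eventually_map]
  filter_upwards [hω] with n hn
  exact not_le.mp hn

/-- A martingale with bounded increments is almost surely `O(√(n log n))`. -/
lemma ae_eventually_abs_sum_range_lt (hc : 0 < c)
    (hD : ∀ k, StronglyMeasurable[F (k + 1)] (D k))
    (hbound : ∀ k ω, |D k ω| ≤ c) (hmart : ∀ k, P[D k|F k] =ᵐ[P] 0) :
    ∀ᵐ ω ∂P, ∀ᶠ n : ℕ in atTop,
      |∑ k ∈ Finset.range n, D k ω| < 2 * c * √(n * log n) := by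
  have hneg := ae_eventually_sum_range_lt (D := fun k => -D k) hc (fun k => (hD k).neg)
    (fun k ω => by simpa using hbound k ω) (P := P) (fun k => by
      filter_upwards [condExp_neg (μ := P) (D k) (F k), hmart k] with ω h1 h2
      simp [h1, h2])
  filter_upwards [ae_eventually_sum_range_lt hc hD hbound hmart, hneg] with ω h1 h2
  filter_upwards [h1, h2] with n h3 h4
  simp only [Pi.neg_apply, Finset.sum_neg_distrib] at h4
  exact abs_lt.mpr ⟨by linarith, h3⟩

end BoundedIncrements

section Lattice

variable {a h : ℝ}

lemma vec_add (x y z x' y' z' : ℝ) :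
    vec x y z + vec x' y' z' = vec (x + x') (y + y') (z + z') := by
  ext i
  fin_cases i <;> simp [vec]

lemma measurableSet_V (i : Fin 2) : MeasurableSet (V a h i) := by
  have : V a h i = ⋃ (k : ℤ) (l : ℤ) (n : ℤ), {vec (a * ((i : ℕ) + (3 / 2) * k))
      (a * ((√3 / 2) * k + √3 * l)) (h * n)} := by
    ext v
    simp [V, eq_comm]
  rw [this]
  exact (countable_iUnion fun _ => countable_iUnion fun _ => countable_iUnion fun _ =>
    countable_singleton _).measurableSet

lemma disjoint_V (ha : 0 < a) : Disjoint (V a h 0) (V a h 1) := by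
  rw [Set.disjoint_left]
  rintro v ⟨k, l, n, rfl⟩ ⟨k', l', n', heq⟩
  have h0 := congrArg (fun v : E => v 0) heq
  simp only [vec, EuclideanSpace.equiv, Fin.isValue] at h0
  simp [ha.ne'] at h0
  have h1 : (3 * k : ℝ) = 2 + 3 * k' := by linarith
  have h2 : 3 * k = 2 + 3 * k' := by exact_mod_cast h1
  omega

lemma zero_mem_V : (0 : E) ∈ V a h 0 := by
  refine ⟨0, 0, 0, ?_⟩
  ext i
  fin_cases i <;> simp [vec]

lemma add_up_mem_V {i : Fin 2} {v : E} (hv : v ∈ V a h i) : v + vec 0 0 h ∈ V a h i := by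
  obtain ⟨k, l, n, rfl⟩ := hv
  refine ⟨k, l, n + 1, ?_⟩
  rw [vec_add]
  push_cast
  congr 1 <;> ring

lemma add_down_mem_V {i : Fin 2} {v : E} (hv : v ∈ V a h i) : v + vec 0 0 (-h) ∈ V a h i := by
  obtain ⟨k, l, n, rfl⟩ := hv
  refine ⟨k, l, n - 1, ?_⟩
  rw [vec_add]
  push_cast
  congr 1 <;> ring

lemma cos_two_pi_div_three : cos (2 * π / 3) = -(1 / 2) := by
  rw [show 2 * π / 3 = π - π / 3 by ring, cos_pi_sub, cos_pi_div_three]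

lemma sin_two_pi_div_three : sin (2 * π / 3) = √3 / 2 := by
  rw [show 2 * π / 3 = π - π / 3 by ring, sin_pi_sub, sin_pi_div_three]

lemma cos_four_pi_div_three : cos (2 * 2 * π / 3) = -(1 / 2) := by
  rw [show 2 * 2 * π / 3 = π / 3 + π by ring, cos_add_pi, cos_pi_div_three]

lemma sin_four_pi_div_three : sin (2 * 2 * π / 3) = -(√3 / 2) := by
  rw [show 2 * 2 * π / 3 = π / 3 + π by ring, sin_add_pi, sin_pi_div_three]

lemma add_w_zero_mem_V {v : E} (hv : v ∈ V a h 0) (j : Fin 3) : v + w a 0 j ∈ V a h 1 := by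
  obtain ⟨k, l, n, rfl⟩ := hv
  fin_cases j
  · refine ⟨k, l, n, ?_⟩
    simp only [w, vec_add]
    congr 1 <;> simp <;> ring
  · refine ⟨k - 1, l + 1, n, ?_⟩
    simp only [w, vec_add]
    congr 1 <;> simp [cos_two_pi_div_three, sin_two_pi_div_three] <;> ring
  · refine ⟨k - 1, l, n, ?_⟩
    simp only [w, vec_add]
    congr 1 <;> simp [cos_four_pi_div_three, sin_four_pi_div_three] <;> ring

lemma add_w_one_mem_V {v : E} (hv : v ∈ V a h 1) (j : Fin 3) : v + w a 1 j ∈ V a h 0 := by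
  obtain ⟨k, l, n, rfl⟩ := hv
  fin_cases j
  · refine ⟨k, l, n, ?_⟩
    simp only [w, vec_add]
    congr 1 <;> simp <;> ring
  · refine ⟨k + 1, l - 1, n, ?_⟩
    simp only [w, vec_add]
    congr 1 <;> simp [cos_add_pi, sin_add_pi, cos_two_pi_div_three, sin_two_pi_div_three] <;> ring
  · refine ⟨k + 1, l, n, ?_⟩
    simp only [w, vec_add]
    congr 1 <;> simp [cos_add_pi, sin_add_pi, cos_four_pi_div_three, sin_four_pi_div_three] <;> ring

/-- The sign of a lattice point: `1` on `V_0`, `-1` on `V_1`, and `0` elsewhere. -/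
def sgnV (a h : ℝ) (x : E) : ℝ :=
  (V a h 0).indicator (fun _ => (1 : ℝ)) x - (V a h 1).indicator (fun _ => (1 : ℝ)) x

lemma sgnV_of_mem_zero (ha : 0 < a) {x : E} (hx : x ∈ V a h 0) : sgnV a h x = 1 := by
  simp [sgnV, hx, Set.disjoint_left.mp (disjoint_V ha) hx]

lemma sgnV_of_mem_one (ha : 0 < a) {x : E} (hx : x ∈ V a h 1) : sgnV a h x = -1 := by
  simp [sgnV, hx, Set.disjoint_right.mp (disjoint_V ha) hx]

lemma measurable_sgnV : Measurable (sgnV a h) :=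
  (measurable_const.indicator (measurableSet_V 0)).sub
    (measurable_const.indicator (measurableSet_V 1))

lemma abs_sgnV_le (x : E) : |sgnV a h x| ≤ 1 := by
  by_cases h0 : x ∈ V a h 0 <;> by_cases h1 : x ∈ V a h 1 <;> simp [sgnV, h0, h1]

end Lattice

namespace IsRWI

variable {Ω : Type} [MeasurableSpace Ω] {P : Measure Ω} {a h p α : ℝ} {q : Fin 2 → Fin 3 → ℝ}
  {S : ℕ → Ω → E} {F : ℕ → MeasurableSpace Ω}

lemma epsI_zero (hRW : IsRWI P a h p α q S F) (ω : Ω) : epsI a h S 0 ω = 1 := by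
  have := sgnV_of_mem_zero (h := h) hRW.ha zero_mem_V
  simpa [epsI, sgnV, hRW.hS0 ω] using this

lemma condExp_epsI_succ (hRW : IsRWI P a h p α q S F) (n : ℕ) :
    P[epsI a h S (n + 1)|F n] =ᵐ[P] fun ω => (2 * p - 1) * epsI a h S n ω := by
  refine (hRW.hTrans n (sgnV a h) measurable_sgnV ⟨1, abs_sgnV_le⟩).trans
    (ae_of_all _ fun ω => ?_)
  change _ = (2 * p - 1) * sgnV a h (S n ω)
  by_cases h0 : S n ω ∈ V a h 0
  · have h1 : S n ω ∉ V a h 1 := Set.disjoint_left.mp (disjoint_V hRW.ha) h0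
    simp only [Fin.sum_univ_two, Fin.sum_univ_three, indicator_of_mem h0,
      indicator_of_notMem h1, sgnV_of_mem_zero hRW.ha h0,
      sgnV_of_mem_zero hRW.ha (add_up_mem_V h0), sgnV_of_mem_zero hRW.ha (add_down_mem_V h0),
      sgnV_of_mem_one hRW.ha (add_w_zero_mem_V h0 _)]
    linarith [hRW.hqsum 0]
  · by_cases h1 : S n ω ∈ V a h 1
    · simp only [Fin.sum_univ_two, Fin.sum_univ_three, indicator_of_mem h1,
        indicator_of_notMem h0, sgnV_of_mem_one hRW.ha h1,
        sgnV_of_mem_one hRW.ha (add_up_mem_V h1), sgnV_of_mem_one hRW.ha (add_down_mem_V h1),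
        sgnV_of_mem_zero hRW.ha (add_w_one_mem_V h1 _)]
      linarith [hRW.hqsum 1]
    · simp [Fin.sum_univ_two, sgnV, h0, h1]

lemma measurable_increment (hRW : IsRWI P a h p α q S F) {k n : ℕ} (hk : k < n) :
    Measurable[F n] (fun ω => S (k + 1) ω - S k ω) := by
  rw [hRW.hF n]
  exact (measurable_pi_apply (X := fun _ : Fin n => E) ⟨k, hk⟩).comp (comap_measurable _)

/-- The natural filtration of the walk. -/
def filtration (hRW : IsRWI P a h p α q S F) : Filtration ℕ ‹MeasurableSpace Ω› where
  seq := F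
  mono' := fun i j hij => by
    rw [hRW.hF i]
    exact Measurable.comap_le (@measurable_pi_lambda _ _ _ (F j) _ _ fun k =>
      hRW.measurable_increment (k.2.trans_le hij))
  le' := fun n => by
    rw [hRW.hF n]
    exact Measurable.comap_le (measurable_pi_lambda _ fun k =>
      (hRW.hSmeas _).sub (hRW.hSmeas _))

lemma measurable_S (hRW : IsRWI P a h p α q S F) (n : ℕ) : Measurable[F n] (S n) := by
  have hS : S n = fun ω => ∑ k ∈ Finset.range n, (S (k + 1) ω - S k ω) := by
    ext1 ω
    rw [Finset.sum_range_sub (fun k => S k ω), hRW.hS0, sub_zero]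
  rw [hS]
  exact Finset.measurable_fun_sum _ fun k hk =>
    hRW.measurable_increment (Finset.mem_range.mp hk)

lemma stronglyMeasurable_epsI (hRW : IsRWI P a h p α q S F) (n : ℕ) :
    StronglyMeasurable[F n] (epsI a h S n) :=
  (measurable_sgnV.comp (hRW.measurable_S n)).stronglyMeasurable

end IsRWI

lemma abs_epsI_le {Ω : Type} (a h : ℝ) (S : ℕ → Ω → E) (n : ℕ) (ω : Ω) :
    |epsI a h S n ω| ≤ 1 := abs_sgnV_le (S n ω)

/-- The increments of the sign martingale. -/
def signIncrement {Ω : Type} (a h p : ℝ) (S : ℕ → Ω → E) (n : ℕ) (ω : Ω) : ℝ :=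
  epsI a h S (n + 1) ω - (2 * p - 1) * epsI a h S n ω

lemma two_mul_II_eq {Ω : Type} (a h p : ℝ) (S : ℕ → Ω → E) (n : ℕ) (ω : Ω) :
    2 * (1 - p) * II a h S n ω = epsI a h S 0 ω + ∑ k ∈ Finset.range n, signIncrement a h p S k ω
      - (2 * p - 1) * epsI a h S n ω := by
  induction n with
  | zero =>
    simp [II]
    ring
  | succ n ih =>
    have hII : II a h S (n + 1) ω = II a h S n ω + epsI a h S (n + 1) ω := by
      simp only [II]
      rw [Finset.sum_range_succ]
    rw [hII, mul_add, ih, Finset.sum_range_succ, signIncrement]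
    ring

namespace IsRWI

variable {Ω : Type} [MeasurableSpace Ω] {P : Measure Ω} {a h p α : ℝ} {q : Fin 2 → Fin 3 → ℝ}
  {S : ℕ → Ω → E} {F : ℕ → MeasurableSpace Ω}

lemma abs_signIncrement_le (hRW : IsRWI P a h p α q S F) (n : ℕ) (ω : Ω) :
    |signIncrement a h p S n ω| ≤ 2 := by
  have h1 := abs_epsI_le a h S (n + 1) ω
  have h2 := abs_epsI_le a h S n ω
  have h3 : |2 * p - 1| ≤ 1 := abs_le.mpr ⟨by linarith [hRW.hp0], by linarith [hRW.hp1]⟩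
  have h4 : |(2 * p - 1) * epsI a h S n ω| ≤ 1 := by
    rw [abs_mul]
    exact mul_le_one₀ h3 (abs_nonneg _) h2
  exact (abs_sub _ _).trans (by linarith)

lemma condExp_signIncrement (hRW : IsRWI P a h p α q S F) (n : ℕ) :
    P[signIncrement a h p S n|F n] =ᵐ[P] 0 := by
  have := hRW.prob
  have hint : ∀ k, Integrable (epsI a h S k) P := fun k =>
    Integrable.of_bound
      ((hRW.stronglyMeasurable_epsI k).mono (hRW.filtration.le k)).aestronglyMeasurable 1
      (ae_of_all _ fun ω => abs_epsI_le a h S k ω)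
  have hself : P[fun ω => (2 * p - 1) * epsI a h S n ω|F n] =
      fun ω => (2 * p - 1) * epsI a h S n ω :=
    condExp_of_stronglyMeasurable (hRW.filtration.le n)
      ((hRW.stronglyMeasurable_epsI n).const_mul _) ((hint n).const_mul _)
  filter_upwards [condExp_sub (hint (n + 1)) ((hint n).const_mul (2 * p - 1)) (F n),
    hRW.condExp_epsI_succ n] with ω h1 h2
  refine h1.trans ?_
  simp only [Pi.sub_apply, Pi.zero_apply]
  rw [hself, h2, sub_self]

lemma ae_NN_eq (hRW : IsRWI P a h p α q S F) (n : ℕ) :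
    ∀ᵐ ω ∂P, NN P a h S F n ω = ∑ k ∈ Finset.range n, signIncrement a h p S k ω := by
  filter_upwards [ae_all_iff.mpr hRW.condExp_epsI_succ] with ω hω
  induction n with
  | zero => simp [NN]
  | succ n ih =>
    rw [Finset.sum_range_succ, ← ih, NN, Finset.sum_Icc_succ_top (Nat.le_add_left 1 n),
      Nat.add_sub_cancel, signIncrement, ← hω n, NN]

lemma ae_II_sq_le (hRW : IsRWI P a h p α q S F) (hp : p < 1) :
    ∀ᵐ ω ∂P, ∃ C > (0 : ℝ), ∃ N₀ : ℕ, ∀ n ≥ N₀,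
      (II a h S n ω) ^ 2 ≤ C * (n * log n) := by
  have := hRW.prob
  have hD : ∀ k, StronglyMeasurable[hRW.filtration (k + 1)] (signIncrement a h p S k) := fun k =>
    (hRW.stronglyMeasurable_epsI (k + 1)).sub
      (((hRW.stronglyMeasurable_epsI k).mono
        (hRW.filtration.mono (Nat.le_succ k))).const_mul (2 * p - 1))
  filter_upwards [ae_eventually_abs_sum_range_lt two_pos hD hRW.abs_signIncrement_le
    hRW.condExp_signIncrement] with ω hω
  have hp' : 0 < 2 * (1 - p) := by linarith
  refine ⟨(6 / (2 * (1 - p))) ^ 2, by positivity, ?_⟩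
  refine eventually_atTop.mp ?_
  filter_upwards [hω, eventually_ge_atTop 3] with n hn hn3
  have hn3' : (3 : ℝ) ≤ n := by exact_mod_cast hn3
  have hlog : 1 ≤ log n := by
    rw [le_log_iff_exp_le (by linarith)]
    linarith [exp_one_lt_d9]
  have hnl : 1 ≤ n * log n := by nlinarith
  have hs : 1 ≤ √(n * log n) := one_le_sqrt.mpr hnl
  have hfinal : |(2 * p - 1) * epsI a h S n ω| ≤ 1 := by
    rw [abs_mul]
    exact mul_le_one₀ (abs_le.mpr ⟨by linarith [hRW.hp0], by linarith [hRW.hp1]⟩)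
      (abs_nonneg _) (abs_epsI_le a h S n ω)
  have hI : |2 * (1 - p) * II a h S n ω| ≤ 6 * √(n * log n) := by
    rw [two_mul_II_eq, hRW.epsI_zero]
    rw [abs_lt] at hn
    rw [abs_le] at hfinal ⊢
    constructor <;> linarith [hn.1, hn.2, hfinal.1, hfinal.2]
  have hsq := sq_le_sq' (neg_le_of_abs_le hI) (le_of_abs_le hI)
  rw [mul_pow, mul_pow 6, sq_sqrt (by linarith)] at hsq
  rw [div_pow, div_mul_eq_mul_div, le_div_iff₀ (by positivity)]
  linarith

end IsRWI

/-- A real sequence with squares of order `n log n` is sublinear. -/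
lemma tendsto_div_of_sq_le_mul_log {u : ℕ → ℝ} {C : ℝ}
    (hu : ∀ᶠ n : ℕ in atTop, u n ^ 2 ≤ C * (n * log n)) :
    Tendsto (fun n : ℕ => u n / n) atTop (nhds 0) := by
  have hlog : Tendsto (fun n : ℕ => C * (log n / n)) atTop (nhds 0) := by
    have h := (isLittleO_log_id_atTop.tendsto_div_nhds_zero.comp
      tendsto_natCast_atTop_atTop).const_mul C
    simpa using h
  have hsq : Tendsto (fun n : ℕ => (u n / n) ^ 2) atTop (nhds 0) := by
    refine tendsto_of_tendsto_of_tendsto_of_le_of_le' tendsto_const_nhds hlog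
      (Eventually.of_forall fun n => sq_nonneg _) ?_
    filter_upwards [hu, eventually_gt_atTop 0] with n hn hn0
    have hn0' : (0 : ℝ) < n := by exact_mod_cast hn0
    rw [div_pow, div_le_iff₀ (by positivity)]
    refine hn.trans (le_of_eq ?_)
    field_simp
  have habs := hsq.sqrt
  simp only [sqrt_sq_eq_abs, sqrt_zero] at habs
  exact (tendsto_zero_iff_abs_tendsto_zero _).mpr habs

end RWI

theorem rwi_occupation {Ω : Type} [MeasurableSpace Ω] (P : Measure Ω)
    (a h p α : ℝ) (q : Fin 2 → Fin 3 → ℝ)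
    (S : ℕ → Ω → RWI.E) (F : ℕ → MeasurableSpace Ω)
    (hRW : RWI.IsRWI P a h p α q S F) (hp : p < 1) :
    (∀ n : ℕ, 1 ≤ n → ∀ᵐ ω ∂P,
      2 * (1 - p) * RWI.II a h S n ω =
        1 + RWI.NN P a h S F n ω - (2 * p - 1) * RWI.epsI a h S n ω) ∧
    (∀ᵐ ω ∂P, Tendsto (fun n : ℕ => RWI.II a h S n ω / n) atTop (nhds 0)) ∧
    (∀ᵐ ω ∂P, ∃ C > (0 : ℝ), ∃ N₀ : ℕ, ∀ n ≥ N₀,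
      (RWI.II a h S n ω) ^ 2 ≤ C * (n * Real.log n)) := by
  refine ⟨fun n _ => ?_, ?_, hRW.ae_II_sq_le hp⟩
  · filter_upwards [hRW.ae_NN_eq n] with ω hω
    rw [RWI.two_mul_II_eq, hω, hRW.epsI_zero]
  · filter_upwards [hRW.ae_II_sq_le hp] with ω ⟨C, _, N₀, hC⟩
    exact RWI.tendsto_div_of_sq_le_mul_log (eventually_atTop.mpr ⟨N₀, hC⟩)
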